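/- Let z : {0,…,T+N-1} → ℝ^q and define the stacked signal Z(k) = [z(k); z(k+1); …; z(k+N)] ∈ ℝ^{q(N+1)} for 0 ≤ k ≤ T-1. Then the Hankel matrices H_{L+N}(z_{[0,T+N-1]}) and H_L(Z_{[0,T-1]}) have the same rank. -/

import Mathlib

open Matrix

/-!
The Hankel matrix of the stacked signal arises from the Hankel matrix of the original signal by
reindexing the rows along `(k, a) ↦ k + a`. This map is onto `{0, …, L + N - 1}`, so rows are
repeated but never lost, and repeating rows does not change the rank.
-/

theorem rank_submatrix_of_surjective {m m₀ n n₀ R : Type*} [Fintype n] [Fintype n₀]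
    [CommSemiring R] (A : Matrix m n R) {f : m₀ → m} (hf : Function.Surjective f) (e : n₀ ≃ n) :
    (A.submatrix f e).rank = A.rank := by
  have range_eq : (A.submatrix f e).mulVecLin.range =
      A.mulVecLin.range.map (LinearMap.funLeft R R f) := by
    have range_funLeft : (LinearMap.funLeft R R e.symm).range = ⊤ :=
      LinearMap.range_eq_top.2 (LinearMap.funLeft_surjective_of_injective R R _ e.symm.injective)
    rw [mulVecLin_submatrix, LinearMap.range_comp, LinearMap.range_comp, range_funLeft,
      Submodule.map_top]
  have funLeft_injective : Function.Injective (LinearMap.funLeft R R f) :=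
    LinearMap.funLeft_injective_of_surjective R R f hf
  rw [rank, rank, range_eq]
  exact (Submodule.equivMapOfInjective _ funLeft_injective _).finrank_eq.symm

section Hankel

variable {ι R : Type*}

/-- The Hankel matrix with `L` block rows and `n` columns of a signal `e` with channels `ι`. Signals
are indexed by all of `ℕ`, but only the samples `e 0, …, e (L + n - 2)` occur in the matrix. -/
def hankelMatrix (L n : ℕ) (e : ℕ → ι → R) : Matrix (Fin L × ι) (Fin n) R :=
  of fun i j => e (i.1 + j) i.2

/-- The signal `k ↦ [z(k); z(k+1); …; z(k+N)]` of windows of length `N + 1` of `z`; the channel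
`(a, r)` is channel `r` of the `a`-th sample in the window. -/
def stackedSignal (N : ℕ) (z : ℕ → ι → R) : ℕ → Fin (N + 1) × ι → R :=
  fun k i => z (k + i.1) i.2

/-- The row of the Hankel matrix of depth `L + N` of a signal that is repeated as the given row of
the Hankel matrix of depth `L` of its stacked signal. -/
def unstackedRow {L N : ℕ} (i : Fin L × (Fin (N + 1) × ι)) : Fin (L + N) × ι :=
  (⟨i.1 + i.2.1, by omega⟩, i.2.2)

theorem unstackedRow_surjective {L N : ℕ} (hL : 1 ≤ L) :
    Function.Surjective (unstackedRow : Fin L × (Fin (N + 1) × ι) → Fin (L + N) × ι) := by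
  rintro ⟨i, r⟩
  obtain hi | hi := Nat.lt_or_ge i L
  · exact ⟨(⟨i, hi⟩, 0, r), rfl⟩
  · have sum_eq : L - 1 + (i - (L - 1)) = (i : ℕ) := by omega
    exact ⟨(⟨L - 1, by omega⟩, ⟨i - (L - 1), by omega⟩, r), Prod.ext (Fin.ext sum_eq) rfl⟩

theorem hankelMatrix_stackedSignal (L N n : ℕ) (z : ℕ → ι → R) :
    hankelMatrix L n (stackedSignal N z) =
      (hankelMatrix (L + N) n z).submatrix unstackedRow (Equiv.refl _) := by
  ext i j
  exact congrArg (z · i.2.2) (Nat.add_right_comm _ _ _)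

theorem hankel_stacked_rank_eq_general [CommSemiring R] {L N : ℕ} (hL : 1 ≤ L) (n : ℕ)
    (z : ℕ → ι → R) :
    (hankelMatrix (L + N) n z).rank = (hankelMatrix L n (stackedSignal N z)).rank := by
  rw [hankelMatrix_stackedSignal, rank_submatrix_of_surjective _ (unstackedRow_surjective hL)]

end Hankel

/-- The Hankel matrix `H_{L+N}(z_{[0,T+N-1]})` of a signal `z` and the Hankel matrix
`H_L(Z_{[0,T-1]})` of its stacked version `Z(k) = [z(k); …; z(k+N)]` have the same
rank (both matrices have `T-L+1` columns). -/
theorem hankel_stacked_rank_eq {q T L N : ℕ} (hL : 1 ≤ L) (hLT : L ≤ T)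
    (z : ℕ → Fin q → ℝ) :
    (Matrix.of fun (ir : Fin (L + N) × Fin q) (j : Fin (T - L + 1)) =>
      z ((ir.1 : ℕ) + (j : ℕ)) ir.2).rank
    = (Matrix.of fun (kar : Fin L × (Fin (N + 1) × Fin q)) (j : Fin (T - L + 1)) =>
      z ((kar.1 : ℕ) + (kar.2.1 : ℕ) + (j : ℕ)) kar.2.2).rank := by
  simpa only [hankelMatrix, stackedSignal, Nat.add_right_comm] using
    hankel_stacked_rank_eq_general hL (T - L + 1) z
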